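/- arXiv:2002.01383 — 3 statements merged into one kernel-verified Lean document; each statement's English description precedes it below -/
import Mathlib

section
/- Let X be a complex Banach space, let 0 < θ ≤ π/2, let q > 2 and s ∈ (1,2), and set p := q(s-1)/s; assume p > 1. Then for every R > 0 there exists a constant C_R > 0, depending only on R, θ, q and s (in particular independent of f), with C_R → 0 as R → 0⁺, such that every f in the Bergman space B^q_θ(X) satisfies (∫_0^R ‖f(t)‖_X^p dt)^{1/p} ≤ C_R ‖f‖_{B^q_θ(X)} (the integral is over the real segment (0,R), on which f is continuous since (0,R) ⊂ Σ_θ). -/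
open MeasureTheory Filter Set

/-- The open sector `Σ_θ` of angle `θ` in the complex plane. -/
def sector (θ : ℝ) : Set ℂ := {z : ℂ | z ≠ 0 ∧ |z.arg| < θ}

lemma sector_ball (θ : ℝ) (hθ0 : 0 < θ) :
    ∃ δ > 0, ∀ t : ℝ, 0 < t → Metric.ball (t : ℂ) (δ * t) ⊆ sector θ := by
  have h1 : ContinuousAt (fun z : ℂ => |z.arg|) 1 :=
    (Complex.continuousAt_arg (by simp)).abs
  have h2 : ∀ᶠ z : ℂ in nhds 1, |z.arg| < θ := by
    apply h1.eventually_lt continuousAt_const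
    simpa using hθ0
  have h3 : ∀ᶠ z : ℂ in nhds 1, z ≠ 0 := isOpen_ne.mem_nhds one_ne_zero
  obtain ⟨δ, hδ, h⟩ := Metric.eventually_nhds_iff_ball.1 (h3.and h2)
  refine ⟨δ, hδ, fun t ht z hz => ?_⟩
  have htc : (t : ℂ) ≠ 0 := by exact_mod_cast ht.ne'
  obtain ⟨w, rfl⟩ : ∃ w, z = t * w := ⟨z / t, by field_simp⟩
  have hw : w ∈ Metric.ball (1 : ℂ) δ := by
    rw [Metric.mem_ball, dist_eq_norm] at hz ⊢
    have : (t : ℂ) * w - t = t * (w - 1) := by ring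
    rw [this, norm_mul, Complex.norm_real, Real.norm_of_nonneg ht.le, mul_comm] at hz
    exact lt_of_mul_lt_mul_right hz ht.le
  obtain ⟨ha, hb⟩ := h w hw
  exact ⟨mul_ne_zero htc ha, by rwa [Complex.arg_real_mul _ ht]⟩

lemma measurableSet_sector (θ : ℝ) : MeasurableSet (sector θ) := by
  have h1 : MeasurableSet {z : ℂ | z ≠ 0} := isOpen_ne.measurableSet
  have h2 : MeasurableSet {z : ℂ | |z.arg| < θ} :=
    measurableSet_lt (continuous_abs.measurable.comp Complex.measurable_arg) measurable_const
  exact h1.inter h2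

lemma circle_mean {X : Type*} [NormedAddCommGroup X] [NormedSpace ℂ X] [CompleteSpace X]
    (f : ℂ → X) (c z : ℂ) (ρ : ℝ) (hf : DifferentiableOn ℂ f (Metric.ball c ρ)) (hz : ‖z‖ < ρ) :
    ENNReal.ofReal (2 * Real.pi) * ‖f c‖ₑ ≤
      ∫⁻ φ in Ioc 0 (2 * Real.pi), ‖f (c + rotation (Circle.exp φ) z)‖ₑ := by
  have hd : DifferentiableOn ℂ (fun w : ℂ => f (c + w * z)) (Metric.closedBall 0 1) := by
    apply hf.comp (by fun_prop)
    intro w hw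
    simp only [Metric.mem_closedBall, dist_zero_right] at hw
    rw [Metric.mem_ball, dist_eq_norm, add_sub_cancel_left, norm_mul]
    have := mul_le_mul_of_nonneg_right hw (norm_nonneg z)
    linarith
  have hm : Real.circleAverage (fun w : ℂ => f (c + w * z)) 0 1 = f c := by
    have h : DiffContOnCl ℂ (fun w : ℂ => f (c + w * z)) (Metric.ball 0 |1|) := by
      apply DifferentiableOn.diffContOnCl
      rw [abs_one, closure_ball _ one_ne_zero]
      exact hd
    simpa using h.circleAverage
  have hpi : 0 < 2 * Real.pi := by positivity
  rw [Real.circleAverage_def] at hm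
  have hm2 : ∫ φ in Ioc 0 (2 * Real.pi), f (c + rotation (Circle.exp φ) z)
      = (2 * Real.pi) • f c := by
    rw [← hm, smul_smul, mul_inv_cancel₀ hpi.ne', one_smul,
      intervalIntegral.integral_of_le hpi.le]
    simp [circleMap, rotation_apply]
  have h := enorm_integral_le_lintegral_enorm (μ := volume.restrict (Ioc 0 (2 * Real.pi)))
    (fun φ : ℝ => f (c + rotation (Circle.exp φ) z))
  rw [hm2, enorm_smul, Real.enorm_eq_ofReal hpi.le] at h
  exact h

lemma area_mean {X : Type*} [NormedAddCommGroup X] [NormedSpace ℂ X] [CompleteSpace X]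
    (f : ℂ → X) (c : ℂ) (ρ : ℝ) (hf : DifferentiableOn ℂ f (Metric.ball c ρ)) :
    ‖f c‖ₑ * volume (Metric.ball c ρ) ≤ ∫⁻ z in Metric.ball c ρ, ‖f z‖ₑ := by
  classical
  set G : ℂ → ENNReal := (Metric.ball c ρ).indicator (fun z => ‖f z‖ₑ) with hG
  have hGm : Measurable G := by
    rw [hG, ← Set.piecewise_eq_indicator]
    exact ContinuousOn.measurable_piecewise hf.continuousOn.enorm continuousOn_const
      Metric.isOpen_ball.measurableSet
  have hpi : 0 < 2 * Real.pi := by positivity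
  have key : ENNReal.ofReal (2 * Real.pi) * (‖f c‖ₑ * volume (Metric.ball c ρ)) ≤
      ENNReal.ofReal (2 * Real.pi) * ∫⁻ z in Metric.ball c ρ, ‖f z‖ₑ := by
    calc ENNReal.ofReal (2 * Real.pi) * (‖f c‖ₑ * volume (Metric.ball c ρ))
        = ∫⁻ z in Metric.ball (0 : ℂ) ρ, ENNReal.ofReal (2 * Real.pi) * ‖f c‖ₑ := by
          rw [setLIntegral_const, Complex.volume_ball, Complex.volume_ball, mul_assoc]
      _ ≤ ∫⁻ z in Metric.ball (0 : ℂ) ρ, ∫⁻ φ in Ioc 0 (2 * Real.pi),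
            G (c + rotation (Circle.exp φ) z) := by
          apply setLIntegral_mono' Metric.isOpen_ball.measurableSet
          intro z hz
          have hz' : ‖z‖ < ρ := by simpa using hz
          refine (circle_mean f c z ρ hf hz').trans_eq ?_
          apply lintegral_congr
          intro φ
          rw [hG, Set.indicator_of_mem]
          simpa using hz'
      _ ≤ ∫⁻ z, ∫⁻ φ in Ioc 0 (2 * Real.pi), G (c + rotation (Circle.exp φ) z) :=
          setLIntegral_le_lintegral _ _
      _ = ∫⁻ φ in Ioc 0 (2 * Real.pi), ∫⁻ z, G (c + rotation (Circle.exp φ) z) := by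
          apply lintegral_lintegral_swap
          apply Measurable.aemeasurable
          apply hGm.comp
          apply Continuous.measurable
          simp only [rotation_apply]
          fun_prop
      _ = ∫⁻ φ in Ioc 0 (2 * Real.pi), ∫⁻ z, G z := by
          apply lintegral_congr
          intro φ
          rw [(rotation (Circle.exp φ)).measurePreserving.lintegral_comp
            (f := fun z => G (c + z)) (by fun_prop), lintegral_add_left_eq_self]
      _ = ENNReal.ofReal (2 * Real.pi) * ∫⁻ z in Metric.ball c ρ, ‖f z‖ₑ := by
          rw [setLIntegral_const, hG, lintegral_indicator Metric.isOpen_ball.measurableSet,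
            Real.volume_Ioc, sub_zero, mul_comm]
  exact (ENNReal.mul_le_mul_iff_right (by simpa using Real.pi_pos) ENNReal.ofReal_ne_top).1 key

lemma pointwise_bound {X : Type*} [NormedAddCommGroup X] [NormedSpace ℂ X] [CompleteSpace X]
    (S : Set ℂ) (hS : MeasurableSet S) (q : ℝ) (hq : 2 < q) (f : ℂ → X)
    (hf : DifferentiableOn ℂ f S) (hi : IntegrableOn (fun z => ‖f z‖ ^ q) S)
    (c : ℂ) (ρ : ℝ) (hρ : 0 < ρ) (hB : Metric.ball c ρ ⊆ S) :
    ‖f c‖ ≤ (Real.pi * ρ ^ 2) ^ (-(1 / q)) * (∫ z in S, ‖f z‖ ^ q) ^ (1 / q) := by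
  have hq0 : 0 < q := by linarith
  have hfm : AEStronglyMeasurable f (volume.restrict S) := hf.continuousOn.aestronglyMeasurable hS
  have hqr : (ENNReal.ofReal q).toReal = q := ENNReal.toReal_ofReal hq0.le
  have hq1 : ENNReal.ofReal q ≠ 0 := by simpa using hq0
  have hmem : MemLp f (ENNReal.ofReal q) (volume.restrict S) := by
    rw [← integrable_norm_rpow_iff hfm hq1 ENNReal.ofReal_ne_top, hqr]
    exact hi
  have hnorm := hmem.eLpNorm_eq_integral_rpow_norm hq1 ENNReal.ofReal_ne_top
  rw [hqr, ← one_div] at hnorm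
  set A := (∫ z in S, ‖f z‖ ^ q) ^ (1 / q) with hA
  have hA0 : 0 ≤ A := by positivity
  set V := Real.pi * ρ ^ 2 with hV
  have hV0 : 0 < V := by positivity
  have hvol : volume (Metric.ball c ρ) = ENNReal.ofReal V := by
    rw [Complex.volume_ball, hV, ENNReal.ofReal_mul Real.pi_pos.le, ENNReal.ofReal_pow hρ.le,
      mul_comm]
    congr 1
    rw [← NNReal.coe_real_pi, ENNReal.ofReal_coe_nnreal]
  have h1 := area_mean f c ρ (hf.mono hB)
  rw [← eLpNorm_one_eq_lintegral_enorm] at h1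
  have h2 := eLpNorm_le_eLpNorm_mul_rpow_measure_univ (p := 1) (q := ENNReal.ofReal q)
    (f := f) (μ := volume.restrict (Metric.ball c ρ))
    (by simpa using (by linarith : (1 : ℝ) ≤ q))
    (hfm.mono_measure (Measure.restrict_mono hB le_rfl))
  have h3 := eLpNorm_mono_measure (p := ENNReal.ofReal q) f
    (Measure.restrict_mono hB (le_refl (volume : Measure ℂ)))
  rw [hqr, Measure.restrict_apply_univ, hvol, ENNReal.toReal_one, div_one,
    ENNReal.ofReal_rpow_of_pos hV0] at h2
  rw [hvol, ← ofReal_norm, ← ENNReal.ofReal_mul (norm_nonneg _)] at h1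
  rw [hnorm] at h3
  have h4 : ENNReal.ofReal (‖f c‖ * V) ≤ ENNReal.ofReal (A * V ^ (1 - 1 / q)) := by
    rw [ENNReal.ofReal_mul hA0]
    exact h1.trans (h2.trans (by gcongr))
  rw [ENNReal.ofReal_le_ofReal_iff (by positivity)] at h4
  have h5 : V ^ (1 - 1 / q) = V ^ (-(1 / q)) * V := by
    rw [← Real.rpow_add_one hV0.ne']; congr 1; ring
  have h6 : A * V ^ (1 - 1 / q) = V ^ (-(1 / q)) * A * V := by rw [h5]; ring
  exact le_of_mul_le_mul_right (h4.trans_eq h6) hV0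

/-- trace estimate on `(0,R)` for Bergman-space functions, with a
constant `C_R` (depending only on `R, θ, q, s`) tending to `0` as `R → 0⁺`. -/
theorem bergman_trace_estimate {X : Type*} [NormedAddCommGroup X] [NormedSpace ℂ X]
    [CompleteSpace X]
    (θ q s p : ℝ) (hθ0 : 0 < θ) (hθ : θ ≤ Real.pi / 2)
    (hq : 2 < q) (hs1 : 1 < s) (hs2 : s < 2)
    (hp : p = q * (s - 1) / s) (hp1 : 1 < p) :
    ∃ C : ℝ → ℝ, (∀ R > 0, 0 < C R) ∧
      Tendsto C (nhdsWithin 0 (Ioi 0)) (nhds 0) ∧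
      ∀ R > 0, ∀ f : ℂ → X,
        DifferentiableOn ℂ f (sector θ) →
        IntegrableOn (fun z => ‖f z‖ ^ q) (sector θ) →
        (∫ t in Ioo (0:ℝ) R, ‖f (t : ℂ)‖ ^ p) ^ (1 / p) ≤
          C R * (∫ z in sector θ, ‖f z‖ ^ q) ^ (1 / q) := by
  obtain ⟨δ, hδ, hball⟩ := sector_ball θ hθ0
  have hq0 : 0 < q := by linarith
  have hp0 : 0 < p := by linarith
  have hV : 0 < Real.pi * δ ^ 2 := by positivity
  set M := ((Real.pi * δ ^ 2) ^ (-(1 / q))) ^ p with hM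
  have hM0 : 0 < M := by positivity
  set a := 2 * (1 / q) * p with ha
  have ha1 : 0 < 1 - a := by
    have : a = 2 * (s - 1) / s := by rw [ha, hp]; field_simp
    rw [this, sub_pos, div_lt_one (by linarith)]
    linarith
  refine ⟨fun R => (M * (R ^ (1 - a) / (1 - a))) ^ (1 / p), ?_, ?_, ?_⟩
  · intro R hR
    have : (0:ℝ) < R := hR
    positivity
  · have hc : ContinuousAt (fun R : ℝ => (M * (R ^ (1 - a) / (1 - a))) ^ (1 / p)) 0 := by
      apply ContinuousAt.rpow_const _ (Or.inr (by positivity))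
      apply continuousAt_const.mul
      apply ContinuousAt.div_const
      exact continuousAt_id.rpow_const (Or.inr ha1.le)
    have h0 : (M * ((0:ℝ) ^ (1 - a) / (1 - a))) ^ (1 / p) = 0 := by
      rw [Real.zero_rpow ha1.ne', zero_div, mul_zero, Real.zero_rpow (by positivity)]
    have := hc.tendsto
    simp only [h0] at this
    exact this.mono_left nhdsWithin_le_nhds
  · intro R hR f hf hi
    have hR0 : (0:ℝ) < R := hR
    set A := (∫ z in sector θ, ‖f z‖ ^ q) ^ (1 / q) with hA
    have hA0 : 0 ≤ A := by positivity
    have hpt : ∀ t ∈ Ioo (0:ℝ) R, ‖f (t : ℂ)‖ ^ p ≤ M * A ^ p * t ^ (-a) := by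
      intro t ht
      have ht0 : 0 < t := ht.1
      have h := pointwise_bound (sector θ) (measurableSet_sector θ) q hq f hf hi t (δ * t)
        (by positivity) (hball t ht0)
      rw [← hA] at h
      have h' := Real.rpow_le_rpow (norm_nonneg _) h hp0.le
      refine h'.trans_eq ?_
      have e1 : Real.pi * (δ * t) ^ 2 = (Real.pi * δ ^ 2) * t ^ (2:ℝ) := by
        rw [Real.rpow_two]; ring
      rw [e1, Real.mul_rpow (by positivity) hA0, Real.mul_rpow hV.le (by positivity),
        Real.mul_rpow (by positivity) (by positivity), ← hM, ← Real.rpow_mul ht0.le,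
        ← Real.rpow_mul ht0.le]
      have e2 : 2 * -(1 / q) * p = -a := by rw [ha]; ring
      rw [e2]; ring
    have hint : IntegrableOn (fun t : ℝ => M * A ^ p * t ^ (-a)) (Ioo 0 R) := by
      apply Integrable.const_mul
      exact (intervalIntegral.integrableOn_Ioo_rpow_iff hR0).2 (by linarith)
    have hle : ∫ t in Ioo (0:ℝ) R, ‖f (t : ℂ)‖ ^ p ≤ M * (R ^ (1 - a) / (1 - a)) * A ^ p := by
      calc ∫ t in Ioo (0:ℝ) R, ‖f (t : ℂ)‖ ^ p
          ≤ ∫ t in Ioo (0:ℝ) R, M * A ^ p * t ^ (-a) := by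
            apply integral_mono_of_nonneg
            · exact Eventually.of_forall fun t => by positivity
            · exact hint
            · exact ae_restrict_of_forall_mem measurableSet_Ioo hpt
        _ = M * (R ^ (1 - a) / (1 - a)) * A ^ p := by
            rw [integral_const_mul, ← integral_Ioc_eq_integral_Ioo,
              ← intervalIntegral.integral_of_le hR0.le, integral_rpow (Or.inl (by linarith))]
            have e3 : -a + 1 = 1 - a := by ring
            rw [e3, Real.zero_rpow ha1.ne']; ring
    have h0 : 0 ≤ ∫ t in Ioo (0:ℝ) R, ‖f (t : ℂ)‖ ^ p :=
      integral_nonneg fun t => by positivity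
    have hfin := Real.rpow_le_rpow h0 hle (by positivity : 0 ≤ 1 / p)
    rw [Real.mul_rpow (by positivity) (by positivity), ← Real.rpow_mul hA0,
      mul_one_div_cancel hp0.ne', Real.rpow_one] at hfin
    exact hfin
end

section
/- Let X be a complex Banach space, let 0 < θ < π/2, set a := tan θ, let α ∈ (0, π/2), set c := cos α, and assume a·c < 1. Let p ≥ 1, let r > 0, and suppose that the closed lens L := {z ∈ ℂ : |z − r(1−ac)| ≤ ar} ∩ {z ∈ ℂ : |z − r(1+ac)| ≤ ar} is contained in Σ_θ. Then every holomorphic function f : Σ_θ → X satisfies the pointwise Cauchy-type estimate ‖f(r)‖_X^p ≤ (4α)^{p−1}/(2π(1−c))^p · ( ∫_{−α}^{α} ‖f(r(1−ac) + ar e^{it})‖_X^p dt + ∫_{−α}^{α} ‖f(r(1+ac) − ar e^{it})‖_X^p dt ). -/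
open MeasureTheory Set

lemma lens_core {X : Type*} [NormedAddCommGroup X] [NormedSpace ℂ X] [CompleteSpace X]
    (U K : Set ℂ) (hU : IsOpen U) (hK : IsCompact K) (hKU : K ⊆ U) (f : ℂ → X)
    (hf : DifferentiableOn ℂ f U) (w w' : ℝ → ℂ) (hw'c : Continuous w')
    (hw : ∀ t, HasDerivAt w (w' t) t) (b : ℝ) (hb : 0 < b) (hsym : w (-b) = - w b) (z₀ : ℂ)
    (hmem : ∀ s ∈ Icc (0:ℝ) 1, ∀ t ∈ Icc (-b) b, z₀ + s * w t ∈ K ∧ z₀ - s * w t ∈ K)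
    (hslit : ∀ t ∈ Icc (-b) b, w t ∈ Complex.slitPlane) :
    ∫ t in (-b)..b, (w' t / w t) • (f (z₀ + w t) + f (z₀ - w t)) =
      (Complex.log (w b) - Complex.log (w (-b))) • ((2:ℂ) • f z₀) := by
  have hbb : -b ≤ b := by linarith
  have hwc : Continuous w := continuous_iff_continuousAt.2 fun t => (hw t).continuousAt
  have hne : ∀ t ∈ Icc (-b) b, w t ≠ 0 := fun t ht => Complex.slitPlane_ne_zero (hslit t ht)
  have hvc : ContinuousOn (fun t => w' t / w t) (Icc (-b) b) :=
    hw'c.continuousOn.div hwc.continuousOn hne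
  have hfc : ContinuousOn f U := hf.continuousOn
  have hdc : ContinuousOn (deriv f) U := (hf.deriv hU).continuousOn
  have hfd : ∀ z ∈ K, HasDerivAt f (deriv f z) z := fun z hz =>
    (hf.differentiableAt (hU.mem_nhds (hKU hz))).hasDerivAt
  obtain ⟨C, hC⟩ := hK.exists_bound_of_continuousOn (hfc.mono hKU)
  obtain ⟨D, hD⟩ := hK.exists_bound_of_continuousOn (hdc.mono hKU)
  have hcomp : ∀ (g : ℂ → X), ContinuousOn g U → ∀ s ∈ Icc (0:ℝ) 1,
      ContinuousOn (fun t => g (z₀ + s * w t)) (Icc (-b) b) ∧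
      ContinuousOn (fun t => g (z₀ - s * w t)) (Icc (-b) b) := by
    intro g hg s hs
    constructor
    · exact hg.comp (by fun_prop) (fun t ht => hKU (hmem s hs t ht).1)
    · exact hg.comp (by fun_prop) (fun t ht => hKU (hmem s hs t ht).2)
  set F : ℝ → ℝ → X := fun s t =>
    (w' t / w t) • (f (z₀ + s * w t) + f (z₀ - s * w t)) with hF
  set F' : ℝ → ℝ → X := fun s t =>
    w' t • (deriv f (z₀ + s * w t) - deriv f (z₀ - s * w t)) with hF'
  have hFc : ∀ s ∈ Icc (0:ℝ) 1, ContinuousOn (F s) (Icc (-b) b) := fun s hs =>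
    hvc.smul ((hcomp f hfc s hs).1.add (hcomp f hfc s hs).2)
  have hF'c : ∀ s ∈ Icc (0:ℝ) 1, ContinuousOn (F' s) (Icc (-b) b) := fun s hs =>
    hw'c.continuousOn.smul ((hcomp _ hdc s hs).1.sub (hcomp _ hdc s hs).2)
  have hsub : uIoc (-b) b ⊆ Icc (-b) b := by
    rw [uIoc_of_le hbb]; exact Ioc_subset_Icc_self
  have hmeas : ∀ G : ℝ → X, ContinuousOn G (Icc (-b) b) →
      AEStronglyMeasurable G (volume.restrict (uIoc (-b) b)) := fun G hG =>
    (hG.aestronglyMeasurable measurableSet_Icc).mono_measure (Measure.restrict_mono hsub le_rfl)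
  have hint : ∀ G : ℝ → X, ContinuousOn G (Icc (-b) b) →
      IntervalIntegrable G volume (-b) b := fun G hG =>
    ContinuousOn.intervalIntegrable (by rwa [uIcc_of_le hbb])
  -- continuity in the parameter
  have hcont : ContinuousOn (fun s => ∫ t in (-b)..b, F s t) (Icc 0 1) := by
    intro s₀ hs₀
    apply intervalIntegral.continuousWithinAt_of_dominated_interval
      (bound := fun t => ‖w' t / w t‖ * (C + C))
    · filter_upwards [self_mem_nhdsWithin] with s hs using hmeas _ (hFc s hs)
    · filter_upwards [self_mem_nhdsWithin] with s hs
      refine Filter.Eventually.of_forall fun t ht => ?_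
      have := hmem s hs t (hsub ht)
      simp only [hF, norm_smul]
      gcongr
      exact (norm_add_le _ _).trans (add_le_add (hC _ this.1) (hC _ this.2))
    · apply ContinuousOn.intervalIntegrable
      rw [uIcc_of_le hbb]
      exact hvc.norm.mul continuousOn_const
    · refine Filter.Eventually.of_forall fun t ht => ?_
      have : ContinuousOn (fun s : ℝ => F s t) (Icc 0 1) := by
        apply ContinuousOn.const_smul
        apply ContinuousOn.add
        · exact hfc.comp (by fun_prop) (fun s hs => hKU (hmem s hs t (hsub ht)).1)
        · exact hfc.comp (by fun_prop) (fun s hs => hKU (hmem s hs t (hsub ht)).2)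
      exact this s₀ hs₀
  have hderiv : ∀ s ∈ Ioo (0:ℝ) 1, HasDerivAt (fun s => ∫ t in (-b)..b, F s t) 0 s := by
    intro s hs
    have h1 := (intervalIntegral.hasDerivAt_integral_of_dominated_loc_of_deriv_le
      (𝕜 := ℝ) (μ := volume) (a := -b) (b := b) (F := F) (F' := F') (x₀ := s) (s := Ioo 0 1)
      (bound := fun t => ‖w' t‖ * (D + D)) (isOpen_Ioo.mem_nhds hs) ?_ ?_ ?_ ?_ ?_ ?_).2
    · have h2 : ∫ t in (-b)..b, F' s t = 0 := by
        have h3 : ∀ t ∈ uIcc (-b) b, HasDerivAt (fun t => f (z₀ + s * w t) + f (z₀ - s * w t))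
            ((s:ℂ) • F' s t) t := by
          intro t ht
          rw [uIcc_of_le hbb] at ht
          have hm := hmem s (Ioo_subset_Icc_self hs) t ht
          have e1 : HasDerivAt (fun t => z₀ + s * w t) (s * w' t) t :=
            ((hw t).const_mul (s:ℂ)).const_add z₀
          have e2 : HasDerivAt (fun t => z₀ - s * w t) (-(s * w' t)) t :=
            ((hw t).const_mul (s:ℂ)).const_sub z₀
          convert ((hfd _ hm.1).scomp t e1).add ((hfd _ hm.2).scomp t e2) using 1
          · rfl
          simp only [hF', smul_sub, neg_smul, mul_smul]
          abel
        have h4 := intervalIntegral.integral_eq_sub_of_hasDerivAt h3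
          (hint _ ((hF'c s (Ioo_subset_Icc_self hs)).const_smul (s:ℂ)))
        rw [intervalIntegral.integral_smul, hsym] at h4
        have h5 : (s:ℂ) • ∫ t in (-b)..b, F' s t = 0 := by
          rw [h4]; simp only [mul_neg, sub_neg_eq_add, ← sub_eq_add_neg]; abel
        exact (smul_eq_zero.1 h5).resolve_left (by exact_mod_cast hs.1.ne')
      rwa [h2] at h1
    · filter_upwards [isOpen_Ioo.mem_nhds hs] with x hx using
        hmeas _ (hFc x (Ioo_subset_Icc_self hx))
    · exact hint _ (hFc s (Ioo_subset_Icc_self hs))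
    · exact hmeas _ (hF'c s (Ioo_subset_Icc_self hs))
    · refine Filter.Eventually.of_forall fun t ht x hx => ?_
      have := hmem x (Ioo_subset_Icc_self hx) t (hsub ht)
      simp only [hF', norm_smul]
      gcongr
      exact (norm_sub_le _ _).trans (add_le_add (hD _ this.1) (hD _ this.2))
    · apply Continuous.intervalIntegrable
      fun_prop
    · refine Filter.Eventually.of_forall fun t ht x hx => ?_
      have hm := hmem x (Ioo_subset_Icc_self hx) t (hsub ht)
      have e0 : HasDerivAt (fun x : ℝ => (x:ℂ) * w t) (w t) x := by
        simpa using (Complex.ofRealCLM.hasDerivAt (x := x)).mul_const (w t)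
      have e1 : HasDerivAt (fun x : ℝ => z₀ + x * w t) (w t) x := e0.const_add z₀
      have e2 : HasDerivAt (fun x : ℝ => z₀ - x * w t) (-(w t)) x := e0.const_sub z₀
      convert (((hfd _ hm.1).scomp x e1).add ((hfd _ hm.2).scomp x e2)).const_smul
        (w' t / w t) using 1
      · rfl
      have := hne t (hsub ht)
      simp only [hF', neg_smul, ← sub_eq_add_neg, ← smul_sub, smul_smul]
      congr 1
      field_simp
  have hconst := intervalIntegral.integral_eq_sub_of_hasDerivAt_of_le (f' := fun _ => (0:X))
    zero_le_one hcont hderiv (by simp)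
  rw [intervalIntegral.integral_zero] at hconst
  have h10 := (sub_eq_zero.1 hconst.symm)
  simp only [hF, Complex.ofReal_one, one_mul, Complex.ofReal_zero, zero_mul, add_zero,
    sub_zero] at h10
  rw [h10, intervalIntegral.integral_smul_const, ← two_smul ℂ (f z₀)]
  congr 1
  apply intervalIntegral.integral_eq_sub_of_hasDerivAt (f := fun t => Complex.log (w t))
  · intro t ht
    rw [uIcc_of_le hbb] at ht
    exact (hw t).clog_real (hslit t ht)
  · apply ContinuousOn.intervalIntegrable
    rwa [uIcc_of_le hbb]

lemma sector_isOpen (θ : ℝ) (hθ : θ < Real.pi / 2) : IsOpen (sector θ) := by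
  have h1 : ContinuousOn (fun z : ℂ => |z.arg|) Complex.slitPlane := fun z hz =>
    (Complex.continuousAt_arg hz).abs.continuousWithinAt
  convert h1.isOpen_inter_preimage Complex.isOpen_slitPlane (isOpen_Iio (a := θ)) using 1
  ext z
  simp only [sector, mem_setOf_eq, mem_inter_iff, mem_preimage, mem_Iio,
    Complex.mem_slitPlane_iff_arg]
  constructor
  · rintro ⟨h, h'⟩
    refine ⟨⟨?_, h⟩, h'⟩
    intro h2
    rw [h2, abs_of_pos Real.pi_pos] at h'
    linarith [Real.pi_pos]
  · rintro ⟨⟨_, h⟩, h'⟩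
    exact ⟨h, h'⟩

lemma jensen_Icc (b p : ℝ) (hb : 0 < b) (hp : 1 ≤ p) (g : ℝ → ℝ) (hg : ∀ t, 0 ≤ g t)
    (hgc : ContinuousOn g (Icc (-b) b)) :
    (∫ t in Icc (-b) b, g t) ^ p ≤ (2 * b) ^ (p - 1) * ∫ t in Icc (-b) b, g t ^ p := by
  have hv : volume.real (Icc (-b) b) = 2 * b := by
    rw [Real.volume_real_Icc_of_le (by linarith)]; ring
  have h := (convexOn_rpow hp).map_set_average_le (μ := volume) (t := Icc (-b) b) (f := g)
    (fun x _ => (Real.continuousAt_rpow_const x p (Or.inr (by linarith))).continuousWithinAt)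
    isClosed_Ici (by simp [Real.volume_Icc]; linarith) (by simp [Real.volume_Icc])
    (Filter.Eventually.of_forall hg) hgc.integrableOn_Icc
    ((hgc.rpow_const (fun _ _ => Or.inr (by linarith))).integrableOn_Icc)
  rw [setAverage_eq, setAverage_eq, hv, smul_eq_mul, smul_eq_mul,
    Real.mul_rpow (by positivity) (integral_nonneg hg), Real.inv_rpow (by positivity),
    inv_mul_le_iff₀ (by positivity)] at h
  rw [Real.rpow_sub_one (by positivity)]
  calc _ ≤ _ := h
    _ = _ := by ring

lemma two_rpow_add (x y p : ℝ) (hx : 0 ≤ x) (hy : 0 ≤ y) (hp : 1 ≤ p) :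
    (x + y) ^ p ≤ 2 ^ (p - 1) * (x ^ p + y ^ p) := by
  lift x to NNReal using hx
  lift y to NNReal using hy
  exact_mod_cast NNReal.rpow_add_le_mul_rpow_add_rpow x y hp

lemma lens_final (A B I J p b k x : ℝ) (hA : 0 ≤ A) (hB : 0 ≤ B) (hp : 1 ≤ p) (hb : 0 < b)
    (hk : 0 < k) (hx : 0 ≤ x) (h : x ≤ (A + B) / k) (hI : A ^ p ≤ (2 * b) ^ (p - 1) * I)
    (hJ : B ^ p ≤ (2 * b) ^ (p - 1) * J) :
    x ^ p ≤ (4 * b) ^ (p - 1) / k ^ p * (I + J) := by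
  have h1 : x ^ p ≤ ((A + B) / k) ^ p := Real.rpow_le_rpow hx h (by linarith)
  rw [Real.div_rpow (by positivity) hk.le] at h1
  have h2 := two_rpow_add A B p hA hB hp
  have h3 : (4 * b) ^ (p - 1) = 2 ^ (p - 1) * (2 * b) ^ (p - 1) := by
    rw [← Real.mul_rpow (by norm_num) (by positivity)]; congr 1; ring
  refine h1.trans ?_
  rw [div_mul_eq_mul_div]
  gcongr
  rw [h3]
  refine h2.trans ?_
  rw [mul_assoc]
  gcongr
  linarith

/-- pointwise Cauchy-type estimate on the lens bounded by the two
circular arcs `γ₁(t) = r(1-ac) + ar e^{it}`, `γ₂(t) = r(1+ac) - ar e^{it}`. -/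
theorem cauchy_lens_estimate {X : Type*} [NormedAddCommGroup X] [NormedSpace ℂ X]
    [CompleteSpace X]
    (θ α p r a c : ℝ) (hθ0 : 0 < θ) (hθ : θ < Real.pi / 2) (ha : a = Real.tan θ)
    (hα0 : 0 < α) (hα : α < Real.pi / 2) (hc : c = Real.cos α)
    (hac : a * c < 1) (hp : 1 ≤ p) (hr : 0 < r)
    (hL : {z : ℂ | ‖z - ((r * (1 - a * c) : ℝ) : ℂ)‖ ≤ a * r} ∩
          {z : ℂ | ‖z - ((r * (1 + a * c) : ℝ) : ℂ)‖ ≤ a * r} ⊆ sector θ)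
    (f : ℂ → X) (hf : DifferentiableOn ℂ f (sector θ)) :
    ‖f (r : ℂ)‖ ^ p ≤
      (4 * α) ^ (p - 1) / (2 * Real.pi * (1 - c)) ^ p *
        ((∫ t in Icc (-α) α,
            ‖f (((r * (1 - a * c) : ℝ) : ℂ) + ((a * r : ℝ) : ℂ) * Complex.exp (Complex.I * (t : ℂ)))‖ ^ p) +
         (∫ t in Icc (-α) α,
            ‖f (((r * (1 + a * c) : ℝ) : ℂ) - ((a * r : ℝ) : ℂ) * Complex.exp (Complex.I * (t : ℂ)))‖ ^ p)) := by
  have hc0 : 0 < c := hc ▸ Real.cos_pos_of_mem_Ioo ⟨by linarith, hα⟩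
  have hc1 : c < 1 := by
    rw [hc, ← Real.cos_zero]
    exact Real.cos_lt_cos_of_nonneg_of_le_pi_div_two le_rfl hα.le hα0
  have ha0 : 0 < a := ha ▸ Real.tan_pos_of_pos_of_lt_pi_div_two hθ0 hθ
  have har : 0 < a * r := mul_pos ha0 hr
  have hsin : 0 < Real.sin α := Real.sin_pos_of_pos_of_lt_pi hα0 (by linarith)
  set K : Set ℂ := {z : ℂ | ‖z - ((r * (1 - a * c) : ℝ) : ℂ)‖ ≤ a * r} ∩
          {z : ℂ | ‖z - ((r * (1 + a * c) : ℝ) : ℂ)‖ ≤ a * r} with hKdef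
  have hK' : K = Metric.closedBall ((r * (1 - a * c) : ℝ) : ℂ) (a * r) ∩
      Metric.closedBall ((r * (1 + a * c) : ℝ) : ℂ) (a * r) := by
    ext z; simp [hKdef, dist_eq_norm]
  have hKc : IsCompact K := by
    rw [hK']
    exact (isCompact_closedBall _ _).inter (isCompact_closedBall _ _)
  have hKconv : Convex ℝ K := by
    rw [hK']
    exact (convex_closedBall _ _).inter (convex_closedBall _ _)
  set w : ℝ → ℂ := fun t => ((a * r : ℝ) : ℂ) * (Complex.exp (Complex.I * (t : ℂ)) - (c : ℂ))
    with hw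
  set w' : ℝ → ℂ := fun t => ((a * r : ℝ) : ℂ) * (Complex.exp (Complex.I * (t : ℂ)) * Complex.I)
    with hw'
  have hg1 : ∀ t : ℝ, ((r * (1 - a * c) : ℝ) : ℂ) +
      ((a * r : ℝ) : ℂ) * Complex.exp (Complex.I * (t : ℂ)) = r + w t := by
    intro t; simp only [hw]; push_cast; ring
  have hg2 : ∀ t : ℝ, ((r * (1 + a * c) : ℝ) : ℂ) -
      ((a * r : ℝ) : ℂ) * Complex.exp (Complex.I * (t : ℂ)) = r - w t := by
    intro t; simp only [hw]; push_cast; ring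
  simp only [hg1, hg2]
  have hcos : ∀ t ∈ Icc (-α) α, c ≤ Real.cos t := by
    intro t ht
    rw [hc, ← Real.cos_abs t]
    exact Real.cos_le_cos_of_nonneg_of_le_pi (abs_nonneg t) (by linarith) (abs_le.2 ht)
  have hexp : ∀ t : ℝ, Complex.exp (Complex.I * (t : ℂ)) = ⟨Real.cos t, Real.sin t⟩ := by
    intro t
    rw [mul_comm]
    apply Complex.ext
    · exact Complex.exp_ofReal_mul_I_re t
    · exact Complex.exp_ofReal_mul_I_im t
  have hn1 : ∀ t : ℝ, ‖Complex.exp (Complex.I * (t : ℂ))‖ = 1 := by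
    intro t
    rw [mul_comm]; exact Complex.norm_exp_ofReal_mul_I t
  have hn2 : ∀ t ∈ Icc (-α) α, ‖Complex.exp (Complex.I * (t : ℂ)) - 2 * (c : ℂ)‖ ≤ 1 := by
    intro t ht
    rw [← sq_le_one_iff₀ (norm_nonneg _), Complex.sq_norm, Complex.normSq_apply, hexp]
    simp
    nlinarith [Real.sin_sq_add_cos_sq t, hcos t ht]
  have hwK : ∀ t ∈ Icc (-α) α, (r : ℂ) + w t ∈ K ∧ (r : ℂ) - w t ∈ K := by
    intro t ht
    have e1 : (r : ℂ) + w t - ((r * (1 - a * c) : ℝ) : ℂ) =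
        ((a * r : ℝ) : ℂ) * Complex.exp (Complex.I * (t : ℂ)) := by
      simp only [hw]; push_cast; ring
    have e2 : (r : ℂ) + w t - ((r * (1 + a * c) : ℝ) : ℂ) =
        ((a * r : ℝ) : ℂ) * (Complex.exp (Complex.I * (t : ℂ)) - 2 * (c : ℂ)) := by
      simp only [hw]; push_cast; ring
    have e3 : (r : ℂ) - w t - ((r * (1 - a * c) : ℝ) : ℂ) =
        -(((a * r : ℝ) : ℂ) * (Complex.exp (Complex.I * (t : ℂ)) - 2 * (c : ℂ))) := by
      simp only [hw]; push_cast; ring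
    have e4 : (r : ℂ) - w t - ((r * (1 + a * c) : ℝ) : ℂ) =
        -(((a * r : ℝ) : ℂ) * Complex.exp (Complex.I * (t : ℂ))) := by
      simp only [hw]; push_cast; ring
    have hnr : ‖((a * r : ℝ) : ℂ)‖ = a * r := by
      rw [Complex.norm_real, Real.norm_of_nonneg har.le]
    have hle := mul_le_of_le_one_right har.le (hn2 t ht)
    simp only [hKdef, mem_inter_iff, mem_setOf_eq, e1, e2, e3, e4, norm_neg, norm_mul, hnr, hn1,
      mul_one, le_refl, true_and, and_true]
    exact ⟨hle, hle⟩
  have hrK : (r : ℂ) ∈ K := by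
    have h := hwK 0 ⟨by linarith, hα0.le⟩
    have := hKconv.midpoint_mem h.1 h.2
    rwa [midpoint_add_sub] at this
  have hmem : ∀ s ∈ Icc (0:ℝ) 1, ∀ t ∈ Icc (-α) α,
      (r:ℂ) + s * w t ∈ K ∧ (r:ℂ) - s * w t ∈ K := by
    intro s hs t ht
    have h := hwK t ht
    constructor
    · simpa using hKconv.add_smul_mem hrK h.1 hs
    · have := hKconv.add_smul_mem hrK (y := -w t) (by simpa [sub_eq_add_neg] using h.2) hs
      simpa [sub_eq_add_neg] using this
  have hwα : w α = ((a * r * Real.sin α : ℝ) : ℂ) * Complex.I := by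
    simp only [hw, hexp, hc]
    apply Complex.ext <;> simp [-Complex.ofReal_cos, -Complex.ofReal_sin]
  have hwα' : w (-α) = ((a * r * Real.sin α : ℝ) : ℂ) * -Complex.I := by
    simp only [hw, hexp, hc]
    apply Complex.ext <;> simp [-Complex.ofReal_cos, -Complex.ofReal_sin]
  have hpos : 0 < a * r * Real.sin α := mul_pos har hsin
  have hslit : ∀ t ∈ Icc (-α) α, w t ∈ Complex.slitPlane := by
    intro t ht
    rcases eq_or_lt_of_le (hcos t ht) with h | h
    · right
      have hs : Real.sin t ≠ 0 := by
        intro h0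
        have := Real.sin_sq_add_cos_sq t
        rw [h0, ← h] at this
        nlinarith
      simp only [hw, hexp, Complex.re_ofReal_mul, Complex.im_ofReal_mul]
      simpa using ⟨⟨ha0.ne', hr.ne'⟩, hs⟩
    · left
      simp only [hw, hexp, Complex.re_ofReal_mul]
      simpa using mul_pos har (sub_pos.2 h)
  have hw'c : Continuous w' := by simp only [hw']; fun_prop
  have hwd : ∀ t, HasDerivAt w (w' t) t := by
    intro t
    have h0 : HasDerivAt (fun t : ℝ => Complex.I * (t : ℂ)) Complex.I t := by
      simpa using (Complex.ofRealCLM.hasDerivAt (x := t)).const_mul Complex.I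
    exact ((h0.cexp).sub_const (c:ℂ)).const_mul _
  have hwc : Continuous w := continuous_iff_continuousAt.2 fun t => (hwd t).continuousAt
  have hcore := lens_core (sector θ) K (sector_isOpen θ hθ) hKc hL f hf w w' hw'c hwd α hα0
    (by rw [hwα, hwα']; ring) (r:ℂ) hmem hslit
  have hlog : Complex.log (w α) - Complex.log (w (-α)) = Real.pi * Complex.I := by
    rw [hwα, hwα', Complex.log_ofReal_mul hpos Complex.I_ne_zero,
      Complex.log_ofReal_mul hpos (neg_ne_zero.2 Complex.I_ne_zero), Complex.log_I,
      Complex.log_neg_I]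
    ring
  have hc1' : 0 < 1 - c := by linarith
  have hf1 : ContinuousOn (fun t => f ((r:ℂ) + w t)) (Icc (-α) α) :=
    hf.continuousOn.comp (by fun_prop) (fun t ht => hL (hwK t ht).1)
  have hf2 : ContinuousOn (fun t => f ((r:ℂ) - w t)) (Icc (-α) α) :=
    hf.continuousOn.comp (by fun_prop) (fun t ht => hL (hwK t ht).2)
  have hv : ∀ t : ℝ, ‖w' t / w t‖ ≤ 1 / (1 - c) := by
    intro t
    have h1 : 1 - c ≤ ‖Complex.exp (Complex.I * (t : ℂ)) - (c : ℂ)‖ := by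
      have := norm_sub_norm_le (Complex.exp (Complex.I * (t : ℂ))) (c : ℂ)
      rwa [hn1, Complex.norm_real, Real.norm_of_nonneg hc0.le] at this
    simp only [hw, hw']
    rw [mul_div_mul_left _ _ (by exact_mod_cast har.ne'), norm_div, norm_mul, hn1,
      Complex.norm_I, mul_one]
    gcongr
  have hbound : ‖∫ t in (-α)..α, (w' t / w t) • (f ((r:ℂ) + w t) + f ((r:ℂ) - w t))‖ ≤
      ∫ t in (-α)..α, 1 / (1 - c) * (‖f ((r:ℂ) + w t)‖ + ‖f ((r:ℂ) - w t)‖) := by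
    apply intervalIntegral.norm_integral_le_of_norm_le (by linarith)
    · refine Filter.Eventually.of_forall fun t ht => ?_
      rw [norm_smul]
      exact mul_le_mul (hv t) (norm_add_le _ _) (norm_nonneg _) (by positivity)
    · apply ContinuousOn.intervalIntegrable
      rw [uIcc_of_le (by linarith)]
      exact continuousOn_const.mul (hf1.norm.add hf2.norm)
  rw [hcore, intervalIntegral.integral_const_mul, intervalIntegral.integral_of_le (by linarith),
    ← integral_Icc_eq_integral_Ioc, integral_add hf1.norm.integrableOn_Icc
    hf2.norm.integrableOn_Icc, hlog, norm_smul, norm_smul, norm_mul, Complex.norm_I,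
    Complex.norm_real, Real.norm_of_nonneg Real.pi_pos.le] at hbound
  refine lens_final (∫ t in Icc (-α) α, ‖f ((r:ℂ) + w t)‖) (∫ t in Icc (-α) α, ‖f ((r:ℂ) - w t)‖)
    _ _ p α _ _ (integral_nonneg fun _ => norm_nonneg _) (integral_nonneg fun _ => norm_nonneg _)
    hp hα0 (by positivity) (norm_nonneg _) ?_
    (jensen_Icc α p hα0 hp _ (fun _ => norm_nonneg _) hf1.norm)
    (jensen_Icc α p hα0 hp _ (fun _ => norm_nonneg _) hf2.norm)
  rw [le_div_iff₀ (by positivity)]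
  rw [one_div, ← div_eq_inv_mul, le_div_iff₀ hc1'] at hbound
  refine le_trans (le_of_eq ?_) hbound
  simp
  ring
end

section
/- Let X be a complex Banach space, let 0 < θ ≤ π/2 and q ∈ (1,∞), and let f belong to the Bergman space B^q_θ(X). Then the translation semigroup is strongly continuous at 0 on B^q_θ(X): ∫_{Σ_θ} ‖f(z + t) − f(z)‖_X^q dA(z) → 0 as t → 0⁺ along the positive real axis, where dA denotes two-dimensional Lebesgue measure on Σ_θ. -/
open MeasureTheory Filter Set

lemma sector_add_mem {θ : ℝ} (hθ : θ ≤ Real.pi / 2) {z : ℂ}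
    (hz : z ∈ sector θ) {t : ℝ} (ht : 0 < t) : z + (t : ℂ) ∈ sector θ := by
  obtain ⟨hz0, hz1⟩ := hz
  have hre : 0 < z.re := by
    rcases Complex.abs_arg_lt_pi_div_two_iff.1 (hz1.trans_le hθ) with h | h
    · exact h
    · exact absurd h hz0
  have hre' : 0 < (z + (t : ℂ)).re := by simp; linarith
  have hw0 : z + (t : ℂ) ≠ 0 := by
    intro h
    rw [h] at hre'
    simp at hre'
  refine ⟨hw0, lt_of_le_of_lt ?_ hz1⟩
  have hcos : Real.cos |z.arg| ≤ Real.cos |(z + (t : ℂ)).arg| := by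
    rw [Real.cos_abs, Real.cos_abs, Complex.cos_arg hz0, Complex.cos_arg hw0,
      div_le_div_iff₀ (norm_pos_iff.2 hz0) (norm_pos_iff.2 hw0)]
    have h1 : ‖z + (t : ℂ)‖ ≤ ‖z‖ + t := by
      refine (norm_add_le _ _).trans ?_
      simp [abs_of_pos ht]
    have h2 : z.re ≤ ‖z‖ := Complex.re_le_norm z
    have h3 : (z + (t : ℂ)).re = z.re + t := by simp
    rw [h3]
    nlinarith [mul_le_mul_of_nonneg_left h1 hre.le, mul_le_mul_of_nonneg_right h2 ht.le]
  by_contra hlt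
  push Not at hlt
  have := Real.cos_lt_cos_of_nonneg_of_le_pi (abs_nonneg _) (Complex.abs_arg_le_pi _) hlt
  linarith

/-- strong continuity at `0` of the translation semigroup on the
Bergman space: `∫_{Σ_θ} ‖f(z+t) - f(z)‖^q dA(z) → 0` as `t → 0⁺`. -/
theorem bergman_translation_strong_continuity {X : Type*} [NormedAddCommGroup X]
    [NormedSpace ℂ X] [CompleteSpace X]
    (θ q : ℝ) (hθ0 : 0 < θ) (hθ : θ ≤ Real.pi / 2) (hq1 : 1 < q)
    (f : ℂ → X) (hf : DifferentiableOn ℂ f (sector θ))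
    (hfi : IntegrableOn (fun z => ‖f z‖ ^ q) (sector θ)) :
    Tendsto (fun t : ℝ => ∫ z in sector θ, ‖f (z + (t : ℂ)) - f z‖ ^ q)
      (nhdsWithin 0 (Ioi 0)) (nhds 0) := by
  have hq0 : 0 < q := by linarith
  have hS := measurableSet_sector θ
  set p : ENNReal := ENNReal.ofReal q with hp
  have hp0 : p ≠ 0 := by simp [hp, hq0]
  have hpt : p ≠ ⊤ := ENNReal.ofReal_ne_top
  have hpr : p.toReal = q := ENNReal.toReal_ofReal hq0.le
  have : Fact (1 ≤ p) := ⟨by rw [hp]; exact ENNReal.one_le_ofReal.2 hq1.le⟩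
  have : Fact (p ≠ ⊤) := ⟨hpt⟩
  have hmeas : AEStronglyMeasurable f (volume.restrict (sector θ)) :=
    hf.continuousOn.aestronglyMeasurable hS
  have hLp : MemLp f p (volume.restrict (sector θ)) := by
    rw [← integrable_norm_rpow_iff hmeas hp0 hpt, hpr]
    exact hfi
  set F : ℂ → X := (sector θ).indicator f with hF
  have hFLp : MemLp F p volume := (memLp_indicator_iff_restrict hS).2 hLp
  have hsh : ∀ t : ℝ, MemLp (fun z => F ((t : ℂ) +ᵥ z)) p volume := fun t =>
    hFLp.comp_measurePreserving (measurePreserving_vadd (t : ℂ) volume)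
  have hcont : Tendsto (fun t : ℝ => DomAddAct.mk (t : ℂ) +ᵥ hFLp.toLp F)
      (nhds 0) (nhds (hFLp.toLp F)) := by
    have hc : Continuous (fun t : ℝ => DomAddAct.mk (t : ℂ) +ᵥ hFLp.toLp F) :=
      (DomAddAct.continuous_mk.comp Complex.continuous_ofReal).vadd continuous_const
    have := hc.tendsto 0
    simpa using this
  have hE : Tendsto (fun t : ℝ => eLpNorm ((fun z => F ((t : ℂ) +ᵥ z)) - F) p volume)
      (nhds 0) (nhds 0) :=
    (Lp.tendsto_Lp_iff_tendsto_eLpNorm'' _ hsh F hFLp).1 hcont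
  have hI : Tendsto (fun t : ℝ => ∫ z, ‖F ((t : ℂ) +ᵥ z) - F z‖ ^ q) (nhds 0) (nhds 0) := by
    have h1 := (ENNReal.tendsto_toReal ENNReal.zero_ne_top).comp hE
    have h2 := h1.rpow_const (p := q) (Or.inr hq0.le)
    rw [ENNReal.toReal_zero, Real.zero_rpow hq0.ne'] at h2
    refine h2.congr fun t => ?_
    have hn : (0 : ℝ) ≤ ∫ z, ‖F ((t : ℂ) +ᵥ z) - F z‖ ^ q :=
      integral_nonneg fun z => by positivity
    simp only [Function.comp]
    rw [((hsh t).sub hFLp).eLpNorm_eq_integral_rpow_norm hp0 hpt, hpr]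
    simp only [Pi.sub_apply]
    rw [ENNReal.toReal_ofReal (by positivity), Real.rpow_inv_rpow hn hq0.ne']
  refine squeeze_zero' (Eventually.of_forall fun t => integral_nonneg fun z => by positivity) ?_
    (hI.mono_left nhdsWithin_le_nhds)
  filter_upwards [self_mem_nhdsWithin] with t ht
  have hint : Integrable (fun z => ‖F ((t : ℂ) +ᵥ z) - F z‖ ^ q) := by
    have := ((hsh t).sub hFLp).integrable_norm_rpow hp0 hpt
    rwa [hpr] at this
  calc ∫ z in sector θ, ‖f (z + (t : ℂ)) - f z‖ ^ q
      = ∫ z in sector θ, ‖F ((t : ℂ) +ᵥ z) - F z‖ ^ q := by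
        refine setIntegral_congr_fun hS fun z hz => ?_
        have h1 : F z = f z := indicator_of_mem hz f
        have h2 : F ((t : ℂ) +ᵥ z) = f (z + (t : ℂ)) := by
          rw [vadd_eq_add, add_comm]
          exact indicator_of_mem (sector_add_mem hθ hz ht) f
        simp only [h1, h2]
    _ ≤ _ := setIntegral_le_integral hint (Eventually.of_forall fun z => by positivity)
end
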